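/- arXiv:1805.09564 — 2 statements merged into one kernel-verified Lean document; each statement's English description precedes it below -/
import Mathlib

section
/- Fix β > 0, energies E ∈ ℝ^d, and the Gibbs distribution q_i = e^{-βE_i}/Z with Z = ∑_j e^{-βE_j}. Let p, p' ∈ ℝ^d be probability vectors with strictly positive entries. Suppose there exist a dimension m, probability vectors r, s ∈ ℝ^m with r and s strictly positive, and a (dm) × (dm) stochastic matrix Λ with Λ(q ⊗ s) = q ⊗ s and Λ(p ⊗ r) = p' ⊗ r. Then for every α ∈ ℝ, D_α(p ‖ q) ≥ D_α(p' ‖ q). -/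
open scoped BigOperators Topology
open Filter

/-- A probability vector: nonnegative entries summing to 1. -/
def IsProbVec {ι : Type*} [Fintype ι] (p : ι → ℝ) : Prop :=
  (∀ i, 0 ≤ p i) ∧ ∑ i, p i = 1

/-- The sum of the `k` largest entries of `p`, as the supremum of sums over subsets of size `k`. -/
noncomputable def topSum {ι : Type*} [Fintype ι] (p : ι → ℝ) (k : ℕ) : ℝ :=
  sSup {x : ℝ | ∃ s : Finset ι, s.card = k ∧ x = ∑ i ∈ s, p i}

/-- `p` majorizes `p'`: for every `1 ≤ k ≤ d`, the sum of the `k` largest entries of `p`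
is at least that of `p'`. -/
def Majorizes {ι : Type*} [Fintype ι] (p p' : ι → ℝ) : Prop :=
  ∀ k : ℕ, 1 ≤ k → k ≤ Fintype.card ι → topSum p' k ≤ topSum p k

/-- A column-stochastic matrix: nonnegative entries, each column sums to 1. -/
def ColStochastic {ι κ : Type*} [Fintype ι] [Fintype κ] (Λ : Matrix ι κ ℝ) : Prop :=
  (∀ i j, 0 ≤ Λ i j) ∧ ∀ j, ∑ i, Λ i j = 1

/-- A bistochastic (doubly stochastic) matrix. -/
def Bistochastic {ι : Type*} [Fintype ι] (A : Matrix ι ι ℝ) : Prop :=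
  (∀ i j, 0 ≤ A i j) ∧ (∀ i, ∑ j, A i j = 1) ∧ (∀ j, ∑ i, A i j = 1)

/-- Real power with the convention `0 ^ a = 0` (in particular `0 ^ 0 = 0`). -/
noncomputable def rpow0 (x a : ℝ) : ℝ := if x = 0 then 0 else x ^ a

/-- The classical Rényi divergence `D_α(p‖q)`, with the conventions `0^0 = 0`, `0·ln 0 = 0`;
for `α < 0` the prefactor is `1/(1-α)`, for `α ∈ [0,1)∪(1,∞)` it is `1/(α-1)`,
and `D_1` is the Kullback–Leibler divergence. -/
noncomputable def renyiD {ι : Type*} [Fintype ι] (α : ℝ) (p q : ι → ℝ) : ℝ :=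
  if α = 1 then ∑ i, p i * Real.log (p i / q i)
  else if α < 0 then (1 / (1 - α)) * Real.log (∑ i, rpow0 (p i) α * rpow0 (q i) (1 - α))
  else (1 / (α - 1)) * Real.log (∑ i, rpow0 (p i) α * rpow0 (q i) (1 - α))

/-- The Rényi entropy `H_α(p) = (sgn α / (1-α)) ln ∑ p_i^α`, with `H_1` the Shannon entropy. -/
noncomputable def renyiH {ι : Type*} [Fintype ι] (α : ℝ) (p : ι → ℝ) : ℝ :=
  if α = 1 then -∑ i, p i * Real.log (p i)
  else ((if 0 ≤ α then (1 : ℝ) else -1) / (1 - α)) * Real.log (∑ i, rpow0 (p i) α)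

/-- Trace (total variation) distance between probability vectors. -/
noncomputable def traceDist {ι : Type*} [Fintype ι] (p p' : ι → ℝ) : ℝ :=
  (1 / 2) * ∑ i, |p i - p' i|

/-- Tensor product of two vectors: `(p ⊗ r)_{(i,j)} = p_i r_j`. -/
def tensorVec {ι κ : Type*} (p : ι → ℝ) (r : κ → ℝ) : ι × κ → ℝ :=
  fun x => p x.1 * r x.2

/-!
For `α ≠ 1`, `D_α(p‖q)` is a multiple of the logarithm of the `f`-divergence
`∑ i, q i * f (p i / q i)` with `f x = x ^ α`; `D_1(p‖q)` is itself the one with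
`f x = x * log x`. If `Λ` is stochastic, each ratio `(Λ p) i / (Λ q) i` is an average of the ratios
`p j / q j` with weights proportional to `Λ i j * q j`, so by Jensen's inequality every such
divergence with `f` convex decreases under `Λ`; for `0 ≤ α < 1` the function `f` is concave, but
then the prefactor `1 / (α - 1)` is negative.
Since `D_α` is additive over tensor products and `D_α(r‖s)` is finite, the contribution of the
catalyst cancels from the data-processing inequality for `p ⊗ r` and `q ⊗ s`.
-/

section DataProcessing

open scoped Matrix

variable {ι κ : Type*} [Fintype ι] [Fintype κ] {α : ℝ} {S : Set ℝ} {f : ℝ → ℝ}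

theorem convexOn_rpow_of_nonpos (hα : α ≤ 0) :
    ConvexOn ℝ (Set.Ioi 0) fun x : ℝ ↦ x ^ α := by
  refine ⟨convex_Ioi 0, fun x hx y hy a b ha hb hab ↦ ?_⟩
  rw [Set.mem_Ioi] at hx hy
  simp only [smul_eq_mul]
  calc (a * x + b * y) ^ α
      ≤ (x ^ a * y ^ b) ^ α :=
        Real.rpow_le_rpow_of_nonpos (by positivity)
          (Real.geom_mean_le_arith_mean2_weighted ha hb hx.le hy.le hab) hα
    _ = (x ^ α) ^ a * (y ^ α) ^ b := by
        rw [Real.mul_rpow (by positivity) (by positivity)]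
        simp only [← Real.rpow_mul hx.le, ← Real.rpow_mul hy.le, mul_comm α]
    _ ≤ a * x ^ α + b * y ^ α :=
        Real.geom_mean_le_arith_mean2_weighted ha hb (by positivity) (by positivity) hab

namespace ColStochastic

variable {Λ : Matrix κ ι ℝ}

theorem sum_mulVec (hΛ : ColStochastic Λ) (v : ι → ℝ) : ∑ i, (Λ *ᵥ v) i = ∑ j, v j := by
  simp only [Matrix.mulVec, dotProduct]
  rw [Finset.sum_comm]
  simp only [← Finset.sum_mul, hΛ.2, one_mul]

theorem nonempty [Nonempty ι] (hΛ : ColStochastic Λ) : Nonempty κ := by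
  by_contra! hκ
  simpa using hΛ.2 (Classical.arbitrary ι)

end ColStochastic

theorem dotProduct_pos_of_dotProduct_ne_zero {w p q : ι → ℝ} (hw : ∀ j, 0 ≤ w j)
    (hp : ∀ j, 0 < p j) (hq : w ⬝ᵥ q ≠ 0) : 0 < w ⬝ᵥ p := by
  obtain ⟨j, -, hj⟩ := Finset.exists_ne_zero_of_sum_ne_zero hq
  have hwj : 0 < w j := (hw j).lt_of_ne' (left_ne_zero_of_mul hj)
  exact Finset.sum_pos' (fun k _ ↦ mul_nonneg (hw k) (hp k).le)
    ⟨j, Finset.mem_univ j, mul_pos hwj (hp j)⟩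

theorem dotProduct_div_dotProduct_eq_centerMass (w p : ι → ℝ) {q : ι → ℝ}
    (hq : ∀ j, q j ≠ 0) :
    w ⬝ᵥ p / w ⬝ᵥ q = Finset.univ.centerMass (fun j ↦ w j * q j) fun j ↦ p j / q j := by
  simp only [Finset.centerMass, dotProduct, smul_eq_mul, mul_assoc, mul_div_cancel₀ _ (hq _)]
  rw [div_eq_inv_mul]

/-- The Csiszár `f`-divergence `∑ i, q i * f (p i / q i)` of two finite vectors. It is meant for
entrywise positive `q`, since a zero entry of `q` contributes zero whatever the entry of `p`. -/
noncomputable def fDiv (f : ℝ → ℝ) (p q : ι → ℝ) : ℝ :=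
  ∑ i, q i * f (p i / q i)

theorem fDiv_mulVec_le (hf : ConvexOn ℝ S f) {Λ : Matrix κ ι ℝ} (hΛ : ColStochastic Λ)
    {p q : ι → ℝ} (hq : ∀ j, 0 < q j) (hΛq : ∀ i, 0 < (Λ *ᵥ q) i) (hS : ∀ j, p j / q j ∈ S) :
    fDiv f (Λ *ᵥ p) (Λ *ᵥ q) ≤ fDiv f p q := by
  have jensen (i : κ) : (Λ *ᵥ q) i * f ((Λ *ᵥ p) i / (Λ *ᵥ q) i) ≤
      (Λ *ᵥ fun j ↦ q j * f (p j / q j)) i := by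
    rw [← le_div_iff₀' (hΛq i)]
    simp only [Matrix.mulVec]
    rw [dotProduct_div_dotProduct_eq_centerMass _ p fun j ↦ (hq j).ne']
    refine (hf.map_centerMass_le (fun j _ ↦ mul_nonneg (hΛ.1 i j) (hq j).le) (hΛq i)
      fun j _ ↦ hS j).trans_eq ?_
    simp only [Finset.centerMass, dotProduct, Function.comp_apply, smul_eq_mul,
      mul_assoc, div_eq_inv_mul]
  exact (Finset.sum_le_sum fun i _ ↦ jensen i).trans_eq (hΛ.sum_mulVec _)

theorem fDiv_rpow_pos [Nonempty ι] (α : ℝ) {p q : ι → ℝ} (hp : ∀ i, 0 < p i)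
    (hq : ∀ i, 0 < q i) : 0 < fDiv (· ^ α) p q :=
  Finset.sum_pos (fun i _ ↦ mul_pos (hq i) (Real.rpow_pos_of_pos (div_pos (hp i) (hq i)) α))
    Finset.univ_nonempty

theorem sum_rpow0_mul_rpow0 (α : ℝ) {p q : ι → ℝ} (hp : ∀ i, 0 < p i) (hq : ∀ i, 0 < q i) :
    ∑ i, rpow0 (p i) α * rpow0 (q i) (1 - α) = fDiv (· ^ α) p q := by
  refine Finset.sum_congr rfl fun i _ ↦ ?_
  simp only [rpow0]
  rw [if_neg (hp i).ne', if_neg (hq i).ne',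
    Real.div_rpow (hp i).le (hq i).le, Real.rpow_sub (hq i), Real.rpow_one]
  ring

theorem renyiD_one {p q : ι → ℝ} (hq : ∀ i, q i ≠ 0) :
    renyiD 1 p q = fDiv (fun x ↦ x * Real.log x) p q := by
  simp only [renyiD, fDiv, if_true, ← mul_assoc, mul_div_cancel₀ _ (hq _)]

theorem renyiD_of_ne_one (hα : α ≠ 1) {p q : ι → ℝ} (hp : ∀ i, 0 < p i) (hq : ∀ i, 0 < q i) :
    renyiD α p q =
      (if α < 0 then 1 / (1 - α) else 1 / (α - 1)) * Real.log (fDiv (· ^ α) p q) := by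
  rw [renyiD, if_neg hα, sum_rpow0_mul_rpow0 α hp hq, ite_mul]

theorem renyiD_mulVec_le [Nonempty ι] (α : ℝ) {Λ : Matrix κ ι ℝ} (hΛ : ColStochastic Λ)
    {p q : ι → ℝ} (hp : ∀ j, 0 < p j) (hq : ∀ j, 0 < q j) (hΛq : ∀ i, 0 < (Λ *ᵥ q) i) :
    renyiD α (Λ *ᵥ p) (Λ *ᵥ q) ≤ renyiD α p q := by
  have : Nonempty κ := hΛ.nonempty
  have hΛp (i : κ) : 0 < (Λ *ᵥ p) i :=
    dotProduct_pos_of_dotProduct_ne_zero (hΛ.1 i) hp (hΛq i).ne'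
  have hpq (j : ι) : p j / q j ∈ Set.Ioi 0 := div_pos (hp j) (hq j)
  have log_le (hf : ConvexOn ℝ (Set.Ioi 0) fun x : ℝ ↦ x ^ α) :
      Real.log (fDiv (· ^ α) (Λ *ᵥ p) (Λ *ᵥ q)) ≤ Real.log (fDiv (· ^ α) p q) :=
    Real.log_le_log (fDiv_rpow_pos α hΛp hΛq) (fDiv_mulVec_le hf hΛ hq hΛq hpq)
  obtain rfl | hα := eq_or_ne α 1
  · rw [renyiD_one fun i ↦ (hΛq i).ne', renyiD_one fun j ↦ (hq j).ne']
    exact fDiv_mulVec_le Real.convexOn_mul_log hΛ hq hΛq fun j ↦ Set.Ioi_subset_Ici_self (hpq j)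
  rw [renyiD_of_ne_one hα hΛp hΛq, renyiD_of_ne_one hα hp hq]
  obtain hneg | hnonneg := lt_or_ge α 0
  · rw [if_pos hneg]
    exact mul_le_mul_of_nonneg_left (log_le (convexOn_rpow_of_nonpos hneg.le))
      (one_div_nonneg.2 (by linarith))
  rw [if_neg hnonneg.not_gt]
  obtain hlt | hgt := hα.lt_or_gt
  · have le_fDiv : fDiv (· ^ α) p q ≤ fDiv (· ^ α) (Λ *ᵥ p) (Λ *ᵥ q) := by
      simpa [fDiv] using
        fDiv_mulVec_le (Real.concaveOn_rpow hnonneg hlt.le).neg hΛ hq hΛq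
          fun j ↦ Set.Ioi_subset_Ici_self (hpq j)
    exact mul_le_mul_of_nonpos_left (Real.log_le_log (fDiv_rpow_pos α hp hq) le_fDiv)
      (one_div_nonpos.2 (by linarith))
  · exact mul_le_mul_of_nonneg_left
      (log_le ((convexOn_rpow hgt.le).subset Set.Ioi_subset_Ici_self (convex_Ioi 0)))
      (one_div_nonneg.2 (by linarith))

end DataProcessing

section Tensor

variable {ι κ : Type*} [Fintype ι] [Fintype κ]

theorem nonempty_of_sum_eq_one {p : ι → ℝ} (hp : ∑ i, p i = 1) : Nonempty ι :=
  Finset.univ_nonempty_iff.1 (Finset.nonempty_of_sum_ne_zero (hp.trans_ne one_ne_zero))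

theorem sum_tensorVec (p : ι → ℝ) (r : κ → ℝ) :
    ∑ x, tensorVec p r x = (∑ i, p i) * ∑ j, r j := by
  simp only [tensorVec, Finset.sum_mul_sum, Fintype.sum_prod_type]

theorem fDiv_rpow_tensorVec (α : ℝ) {p q : ι → ℝ} {r s : κ → ℝ} (hp : ∀ i, 0 ≤ p i)
    (hq : ∀ i, 0 ≤ q i) (hr : ∀ j, 0 ≤ r j) (hs : ∀ j, 0 ≤ s j) :
    fDiv (· ^ α) (tensorVec p r) (tensorVec q s) = fDiv (· ^ α) p q * fDiv (· ^ α) r s := by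
  simp only [fDiv, tensorVec, Finset.sum_mul_sum, Fintype.sum_prod_type]
  refine Finset.sum_congr rfl fun i _ ↦ Finset.sum_congr rfl fun j _ ↦ ?_
  rw [mul_div_mul_comm,
    Real.mul_rpow (div_nonneg (hp i) (hq i)) (div_nonneg (hr j) (hs j)), mul_mul_mul_comm]

theorem fDiv_mul_log_tensorVec {p q : ι → ℝ} {r s : κ → ℝ} (hp : ∀ i, p i ≠ 0)
    (hq : ∀ i, q i ≠ 0) (hr : ∀ j, r j ≠ 0) (hs : ∀ j, s j ≠ 0) :
    fDiv (fun x ↦ x * Real.log x) (tensorVec p r) (tensorVec q s) =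
      fDiv (fun x ↦ x * Real.log x) p q * ∑ j, r j +
        (∑ i, p i) * fDiv (fun x ↦ x * Real.log x) r s := by
  simp only [fDiv, tensorVec, Finset.sum_mul_sum, Fintype.sum_prod_type,
    ← Finset.sum_add_distrib]
  refine Finset.sum_congr rfl fun i _ ↦ Finset.sum_congr rfl fun j _ ↦ ?_
  have hqi := hq i
  have hsj := hs j
  rw [mul_div_mul_comm, Real.log_mul (div_ne_zero (hp i) hqi) (div_ne_zero (hr j) hsj)]
  field_simp

theorem renyiD_tensorVec (α : ℝ) {p q : ι → ℝ} {r s : κ → ℝ} (hp : ∀ i, 0 < p i)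
    (hq : ∀ i, 0 < q i) (hr : ∀ j, 0 < r j) (hs : ∀ j, 0 < s j) (hp_sum : ∑ i, p i = 1)
    (hr_sum : ∑ j, r j = 1) :
    renyiD α (tensorVec p r) (tensorVec q s) = renyiD α p q + renyiD α r s := by
  have hpr (x : ι × κ) : 0 < tensorVec p r x := mul_pos (hp _) (hr _)
  have hqs (x : ι × κ) : 0 < tensorVec q s x := mul_pos (hq _) (hs _)
  obtain rfl | hα := eq_or_ne α 1
  · rw [renyiD_one fun x ↦ (hqs x).ne', renyiD_one fun i ↦ (hq i).ne',
      renyiD_one fun j ↦ (hs j).ne',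
      fDiv_mul_log_tensorVec (fun i ↦ (hp i).ne') (fun i ↦ (hq i).ne') (fun j ↦ (hr j).ne')
        (fun j ↦ (hs j).ne'), hp_sum, hr_sum, mul_one, one_mul]
  · have : Nonempty ι := nonempty_of_sum_eq_one hp_sum
    have : Nonempty κ := nonempty_of_sum_eq_one hr_sum
    rw [renyiD_of_ne_one hα hpr hqs, renyiD_of_ne_one hα hp hq, renyiD_of_ne_one hα hr hs,
      fDiv_rpow_tensorVec α (fun i ↦ (hp i).le) (fun i ↦ (hq i).le) (fun j ↦ (hr j).le)
        (fun j ↦ (hs j).le),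
      Real.log_mul (fDiv_rpow_pos α hp hq).ne' (fDiv_rpow_pos α hr hs).ne', mul_add]

end Tensor

theorem renyiD_monotone_of_catalytic_general {ι ι' κ : Type*} [Fintype ι] [Fintype ι']
    [Fintype κ] {p q : ι → ℝ} {p' q' : ι' → ℝ} {r s : κ → ℝ} {Λ : Matrix (ι' × κ) (ι × κ) ℝ}
    (hp : ∀ i, 0 < p i) (hq : ∀ i, 0 < q i) (hq' : ∀ i, 0 < q' i) (hr : ∀ j, 0 < r j)
    (hs : ∀ j, 0 < s j) (hp_sum : ∑ i, p i = 1) (hr_sum : ∑ j, r j = 1)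
    (hΛ : ColStochastic Λ) (hΛqs : Λ.mulVec (tensorVec q s) = tensorVec q' s)
    (hΛpr : Λ.mulVec (tensorVec p r) = tensorVec p' r) (α : ℝ) :
    renyiD α p' q' ≤ renyiD α p q := by
  have : Nonempty ι := nonempty_of_sum_eq_one hp_sum
  have : Nonempty κ := nonempty_of_sum_eq_one hr_sum
  have hpr (x : ι × κ) : 0 < tensorVec p r x := mul_pos (hp _) (hr _)
  have hqs (x : ι × κ) : 0 < tensorVec q s x := mul_pos (hq _) (hs _)
  have hq's (x : ι' × κ) : 0 < Λ.mulVec (tensorVec q s) x := hΛqs ▸ mul_pos (hq' _) (hs _)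
  have hp' (i : ι') : 0 < p' i := by
    obtain ⟨j⟩ := ‹Nonempty κ›
    have hp'r : 0 < tensorVec p' r (i, j) :=
      hΛpr ▸ dotProduct_pos_of_dotProduct_ne_zero (hΛ.1 (i, j)) hpr (hq's (i, j)).ne'
    exact pos_of_mul_pos_left hp'r (hr j).le
  have hp'_sum : ∑ i, p' i = 1 := by
    simpa [hΛpr, sum_tensorVec, hp_sum, hr_sum] using hΛ.sum_mulVec (tensorVec p r)
  have data_processing := renyiD_mulVec_le α hΛ hpr hqs hq's
  rw [hΛpr, hΛqs, renyiD_tensorVec α hp' hq' hr hs hp'_sum hr_sum,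
    renyiD_tensorVec α hp hq hr hs hp_sum hr_sum] at data_processing
  exact le_of_add_le_add_right data_processing

/-- **Generalized free energies are monotones under catalytic thermal operations.** If a
Gibbs-stochastic map `Λ` fixes `q ⊗ s` and maps `p ⊗ r` to `p' ⊗ r` (with catalyst `r`), then
`D_α(p ‖ q) ≥ D_α(p' ‖ q)` for every `α ∈ ℝ`. -/
theorem renyiD_monotone_of_catalytic {d m : ℕ} (β : ℝ) (hβ : 0 < β) (E : Fin d → ℝ)
    (Z : ℝ) (hZ : Z = ∑ j, Real.exp (-β * E j))
    (q : Fin d → ℝ) (hq : ∀ i, q i = Real.exp (-β * E i) / Z)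
    (p p' : Fin d → ℝ) (hp : IsProbVec p) (hp' : IsProbVec p')
    (hppos : ∀ i, 0 < p i) (hp'pos : ∀ i, 0 < p' i)
    (r s : Fin m → ℝ) (hr : IsProbVec r) (hs : IsProbVec s)
    (hrpos : ∀ j, 0 < r j) (hspos : ∀ j, 0 < s j)
    (Λ : Matrix (Fin d × Fin m) (Fin d × Fin m) ℝ) (hΛ : ColStochastic Λ)
    (hfix : Λ.mulVec (tensorVec q s) = tensorVec q s)
    (htrans : Λ.mulVec (tensorVec p r) = tensorVec p' r) :
    ∀ α : ℝ, renyiD α p' q ≤ renyiD α p q := by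
  have hqpos (i : Fin d) : 0 < q i := by
    rw [hq, hZ]
    exact div_pos (Real.exp_pos _)
      (Finset.sum_pos (fun _ _ ↦ Real.exp_pos _) ⟨i, Finset.mem_univ i⟩)
  exact renyiD_monotone_of_catalytic_general hppos hqpos hqpos hrpos hspos hp.2 hr.2 hΛ hfix
    htrans
end

section
/- Fix β > 0, energies E ∈ ℝ^d, Gibbs weights g_i = e^{-βE_i}, Z = ∑_i g_i, and the Gibbs distribution q = g/Z. Let p ∈ ℝ^d be a probability vector with support S = {i : p_i > 0}, and let W > 0. Model a battery as a two-level system with energies (0, W), so the joint Gibbs weight vector is G_{(i,b)} = e^{-βE_i} e^{-βWb} for b ∈ {0,1}. Then there exists a stochastic matrix Λ on ℝ^{2d} with Λ G = G and Λ (p ⊗ (1,0)) = q ⊗ (0,1) if and only if W ≤ β^{-1} ln( Z / ∑_{i∈S} e^{-βE_i} ). The right-hand side equals β^{-1} D_0(p‖q), so the single-shot extractable work is F_0(p) − F_0(q) with F_α(p) = β^{-1}[ln Z + D_α(p‖q)]. -/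
open scoped BigOperators Topology
open Filter

/-!
Write `w(A)` for the total weight of a set of levels. A stochastic map that preserves the weights
can never decrease the weight of the support of a state: the columns indexed by `supp ρ` are carried
by `supp (Λρ)`, and they transport all of `w(supp ρ)` there. Conversely, if the target is the Gibbs
state conditioned on a set `B` and `w(supp ρ) ≤ w(B)`, test whether the level lies in `supp ρ`,
prepare the target if so, and otherwise prepare the normalised remainder of the weight vector.
With a battery `w(supp ρ) = ∑_{i ∈ supp p} e^{-βE_i}` and `w(B) = Z e^{-βW}`, so that the comparison
of the two weights is the bound on `W`.
-/

section

open scoped Matrix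

variable {ι κ : Type*}

lemma le_inv_mul_log_div_iff {β W Z s : ℝ} (hβ : 0 < β) (hZ : 0 < Z) (hs : 0 < s) :
    W ≤ β⁻¹ * Real.log (Z / s) ↔ s ≤ Z * Real.exp (-β * W) := by
  rw [le_inv_mul_iff₀ hβ, Real.le_log_iff_exp_le (div_pos hZ hs), le_div_iff₀' hs,
    neg_mul, Real.exp_neg, ← div_eq_mul_inv, le_div_iff₀ (Real.exp_pos _)]

/-- The weights `w` conditioned on `B`, i.e. restricted to `B` and normalised; for Gibbs weights
this is the Gibbs state of the levels in `B`. -/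
noncomputable def condVec (B : Finset ι) (w : ι → ℝ) : ι → ℝ :=
  (B : Set ι).indicator fun i => w i / ∑ j ∈ B, w j

lemma condVec_nonneg {B : Finset ι} {w : ι → ℝ} (hw : ∀ i, 0 ≤ w i) (i : ι) :
    0 ≤ condVec B w i :=
  Set.indicator_nonneg (fun k _ => div_nonneg (hw k) (Finset.sum_nonneg fun j _ => hw j)) i

lemma mul_condVec_le {B : Finset ι} {w : ι → ℝ} (hw : ∀ i, 0 ≤ w i) {s : ℝ}
    (hs : s ≤ ∑ i ∈ B, w i) (i : ι) : s * condVec B w i ≤ w i := by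
  by_cases hi : i ∈ B
  · calc s * condVec B w i ≤ (∑ j ∈ B, w j) * condVec B w i :=
          mul_le_mul_of_nonneg_right hs (condVec_nonneg hw i)
      _ = w i := by
          rw [condVec, Set.indicator_of_mem (Finset.mem_coe.mpr hi)]
          refine mul_div_cancel_of_imp' fun h => ?_
          exact (Finset.sum_eq_zero_iff_of_nonneg fun j _ => hw j).mp h i hi
  · simpa [condVec, hi] using hw i

lemma sum_product_tensorVec (s : Finset ι) (t : Finset κ) (v : ι → ℝ) (w : κ → ℝ) :
    ∑ x ∈ s ×ˢ t, tensorVec v w x = (∑ i ∈ s, v i) * ∑ j ∈ t, w j := by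
  rw [Finset.sum_mul_sum, Finset.sum_product]
  rfl

lemma condVec_product_tensorVec (s : Finset ι) (t : Finset κ) (v : ι → ℝ)
    (w : κ → ℝ) :
    condVec (s ×ˢ t) (tensorVec v w) = tensorVec (condVec s v) (condVec t w) := by
  ext ⟨i, j⟩
  simp only [condVec, sum_product_tensorVec]
  by_cases hi : i ∈ s <;> by_cases hj : j ∈ t <;> simp [tensorVec, hi, hj, mul_div_mul_comm]

/-- The channel that tests whether its input lies in `A`, and prepares `σ` if it does and `τ` if it
does not. -/
def measurePrepare [DecidableEq ι] (A : Finset ι) (σ τ : κ → ℝ) : Matrix κ ι ℝ :=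
  Matrix.of fun j i => if i ∈ A then σ j else τ j

variable [Fintype ι]

lemma renyiD_zero {p : ι → ℝ} (hp : ∀ i, 0 ≤ p i) (q : ι → ℝ) :
    renyiD 0 p q = -Real.log (∑ i with 0 < p i, q i) := by
  have hterm (i : ι) : rpow0 (p i) 0 * rpow0 (q i) (1 - 0) = if 0 < p i then q i else 0 := by
    by_cases hpi : p i = 0 <;> by_cases hqi : q i = 0 <;> simp [rpow0, hpi, hqi, (hp i).lt_iff_ne']
  simp only [renyiD, hterm, ← Finset.sum_filter]
  norm_num

lemma IsProbVec.sum_pos_support {p : ι → ℝ} (hp : IsProbVec p) : ∑ i with 0 < p i, p i = 1 := by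
  rw [← hp.2]
  exact Finset.sum_filter_of_ne fun i _ hi => (hp.1 i).lt_of_ne' hi

lemma IsProbVec.pos_support_nonempty {p : ι → ℝ} (hp : IsProbVec p) :
    (Finset.univ.filter fun i => 0 < p i).Nonempty :=
  Finset.nonempty_of_sum_ne_zero (hp.sum_pos_support.trans_ne one_ne_zero)

lemma isProbVec_condVec {B : Finset ι} {w : ι → ℝ} (hw : ∀ i, 0 ≤ w i) (hB : 0 < ∑ i ∈ B, w i) :
    IsProbVec (condVec B w) := by
  refine ⟨condVec_nonneg hw, ?_⟩
  rw [condVec, Finset.sum_indicator_subset _ (Finset.subset_univ B), ← Finset.sum_div,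
    div_self hB.ne']

lemma exists_isProbVec_eq_smul_add_smul {w σ : ι → ℝ} (hσ : IsProbVec σ) {s t : ℝ} (ht : 0 ≤ t)
    (hle : ∀ i, s * σ i ≤ w i) (hsum : ∑ i, w i = s + t) :
    ∃ τ, IsProbVec τ ∧ w = s • σ + t • τ := by
  have hrem : ∑ i, (w i - s * σ i) = t := by
    rw [Finset.sum_sub_distrib, ← Finset.mul_sum, hσ.2, hsum]
    ring
  rcases ht.eq_or_lt with rfl | htpos
  · have hzero := (Finset.sum_eq_zero_iff_of_nonneg fun i _ => sub_nonneg.mpr (hle i)).mp hrem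
    refine ⟨σ, hσ, funext fun i => ?_⟩
    simpa using sub_eq_zero.mp (hzero i (Finset.mem_univ i))
  · refine ⟨fun i => (w i - s * σ i) / t,
      ⟨fun i => div_nonneg (sub_nonneg.mpr (hle i)) ht, ?_⟩, funext fun i => ?_⟩
    · rw [← Finset.sum_div, hrem, div_self htpos.ne']
    · simp [mul_div_cancel₀ _ htpos.ne']

lemma measurePrepare_mulVec [DecidableEq ι] (A : Finset ι) (σ τ : κ → ℝ) (v : ι → ℝ) :
    measurePrepare A σ τ *ᵥ v = (∑ i ∈ A, v i) • σ + (∑ i ∈ Aᶜ, v i) • τ := by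
  ext j
  simp only [Matrix.mulVec, dotProduct, measurePrepare, Matrix.of_apply, Pi.add_apply,
    Pi.smul_apply, smul_eq_mul, Finset.sum_mul, ← Finset.sum_add_sum_compl A]
  congr 1 <;> refine Finset.sum_congr rfl fun i hi => ?_
  · rw [if_pos hi, mul_comm]
  · rw [if_neg (Finset.mem_compl.mp hi), mul_comm]

lemma apply_eq_zero_of_mulVec_apply_eq_zero {Λ : Matrix κ ι ℝ} {ρ : ι → ℝ} {j : κ}
    (hΛ : ∀ i, 0 ≤ Λ j i) (hρ : ∀ i, 0 ≤ ρ i) (hj : (Λ *ᵥ ρ) j = 0) {i : ι} (hi : 0 < ρ i) :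
    Λ j i = 0 := by
  have hterm : Λ j i * ρ i = 0 :=
    (Finset.sum_eq_zero_iff_of_nonneg fun k _ => mul_nonneg (hΛ k) (hρ k)).mp hj i
      (Finset.mem_univ i)
  exact (mul_eq_zero.mp hterm).resolve_right hi.ne'

variable [Fintype κ]

/-- The data-processing inequality for `D_0`, before normalisation and logarithms. -/
lemma ColStochastic.sum_pos_support_le {Λ : Matrix κ ι ℝ} (hΛ : ColStochastic Λ) {w ρ : ι → ℝ}
    (hw : ∀ i, 0 ≤ w i) (hρ : ∀ i, 0 ≤ ρ i) {B : Finset κ} (hB : ∀ j ∉ B, (Λ *ᵥ ρ) j = 0) :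
    ∑ i with 0 < ρ i, w i ≤ ∑ j ∈ B, (Λ *ᵥ w) j := by
  have hcol (i : ι) (hi : 0 < ρ i) : ∑ j ∈ B, Λ j i = 1 := by
    rw [← hΛ.2 i]
    exact Finset.sum_subset (Finset.subset_univ B) fun j _ hj =>
      apply_eq_zero_of_mulVec_apply_eq_zero (hΛ.1 j) hρ (hB j hj) hi
  calc ∑ i with 0 < ρ i, w i
      = ∑ i with 0 < ρ i, ∑ j ∈ B, Λ j i * w i := by
        refine Finset.sum_congr rfl fun i hi => ?_
        rw [← Finset.sum_mul, hcol i (Finset.mem_filter.mp hi).2, one_mul]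
    _ ≤ ∑ i, ∑ j ∈ B, Λ j i * w i :=
        Finset.sum_le_sum_of_subset_of_nonneg (Finset.filter_subset _ _) fun i _ _ =>
          Finset.sum_nonneg fun j _ => mul_nonneg (hΛ.1 j i) (hw i)
    _ = ∑ j ∈ B, (Λ *ᵥ w) j := Finset.sum_comm

lemma colStochastic_measurePrepare [DecidableEq ι] (A : Finset ι) {σ τ : κ → ℝ}
    (hσ : IsProbVec σ) (hτ : IsProbVec τ) : ColStochastic (measurePrepare A σ τ) := by
  constructor
  · intro j i
    by_cases hi : i ∈ A
    · simpa [measurePrepare, hi] using hσ.1 j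
    · simpa [measurePrepare, hi] using hτ.1 j
  · intro i
    by_cases hi : i ∈ A
    · simpa [measurePrepare, hi] using hσ.2
    · simpa [measurePrepare, hi] using hτ.2

lemma exists_colStochastic_mulVec_eq {w ρ : ι → ℝ} {w' σ : κ → ℝ} (hw : ∀ i, 0 ≤ w i)
    (hρ : IsProbVec ρ) (hσ : IsProbVec σ) (hsum : ∑ j, w' j = ∑ i, w i)
    (hle : ∀ j, (∑ i with 0 < ρ i, w i) * σ j ≤ w' j) :
    ∃ Λ : Matrix κ ι ℝ, ColStochastic Λ ∧ Λ *ᵥ w = w' ∧ Λ *ᵥ ρ = σ := by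
  classical
  set A : Finset ι := {i | 0 < ρ i}
  obtain ⟨τ, hτ, hw'⟩ := exists_isProbVec_eq_smul_add_smul hσ
    (Finset.sum_nonneg fun i _ => hw i : 0 ≤ ∑ i ∈ Aᶜ, w i) hle
    (hsum.trans (Finset.sum_add_sum_compl A w).symm)
  have hρA : ∑ i ∈ A, ρ i = 1 := hρ.sum_pos_support
  have hρAc : ∑ i ∈ Aᶜ, ρ i = 0 := by
    linarith [Finset.sum_add_sum_compl A ρ, hρ.2]
  refine ⟨measurePrepare A σ τ, colStochastic_measurePrepare A hσ hτ, ?_, ?_⟩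
  · rw [measurePrepare_mulVec, hw']
  · rw [measurePrepare_mulVec, hρA, hρAc, one_smul, zero_smul, add_zero]

theorem exists_colStochastic_mulVec_eq_condVec_iff {w ρ : ι → ℝ} {w' : κ → ℝ} {B : Finset κ}
    (hw : ∀ i, 0 ≤ w i) (hw' : ∀ j, 0 ≤ w' j) (hρ : IsProbVec ρ) (hB : 0 < ∑ j ∈ B, w' j)
    (hsum : ∑ j, w' j = ∑ i, w i) :
    (∃ Λ : Matrix κ ι ℝ, ColStochastic Λ ∧ Λ *ᵥ w = w' ∧ Λ *ᵥ ρ = condVec B w') ↔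
      ∑ i with 0 < ρ i, w i ≤ ∑ j ∈ B, w' j := by
  constructor
  · rintro ⟨Λ, hΛ, rfl, hΛρ⟩
    exact hΛ.sum_pos_support_le hw hρ.1 fun j hj => by simp [hΛρ, condVec, hj]
  · intro hle
    exact exists_colStochastic_mulVec_eq hw hρ (isProbVec_condVec hw' hB) hsum
      (mul_condVec_le hw' hle)

lemma IsProbVec.tensorVec {p : ι → ℝ} {r : κ → ℝ} (hp : IsProbVec p) (hr : IsProbVec r) :
    IsProbVec (tensorVec p r) := by
  refine ⟨fun x => mul_nonneg (hp.1 x.1) (hr.1 x.2), ?_⟩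
  simp only [_root_.tensorVec, Fintype.sum_prod_type, ← Finset.mul_sum, hr.2, mul_one, hp.2]

lemma filter_pos_tensorVec {p : ι → ℝ} {r : κ → ℝ} (hp : ∀ i, 0 ≤ p i) (hr : ∀ j, 0 ≤ r j) :
    (Finset.univ.filter fun x => 0 < tensorVec p r x) =
      (Finset.univ.filter fun i => 0 < p i) ×ˢ (Finset.univ.filter fun j => 0 < r j) := by
  ext ⟨i, j⟩
  have hmul : 0 < tensorVec p r (i, j) ↔ 0 < p i ∧ 0 < r j := by
    simp only [tensorVec, (mul_nonneg (hp i) (hr j)).lt_iff_ne', (hp i).lt_iff_ne',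
      (hr j).lt_iff_ne', mul_ne_zero_iff]
  simp only [Finset.mem_filter, Finset.mem_univ, true_and, Finset.mem_product, hmul]

theorem exists_colStochastic_charge_battery_iff {g p : ι → ℝ} (hg : ∀ i, 0 ≤ g i)
    (hZ : 0 < ∑ i, g i) (hp : IsProbVec p) {c : ℝ} (hc : 0 < c) :
    (∃ Λ : Matrix (ι × Fin 2) (ι × Fin 2) ℝ, ColStochastic Λ ∧
        Λ *ᵥ tensorVec g ![1, c] = tensorVec g ![1, c] ∧
        Λ *ᵥ tensorVec p ![1, 0] = tensorVec (condVec Finset.univ g) ![0, 1]) ↔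
      ∑ i with 0 < p i, g i ≤ (∑ i, g i) * c := by
  have hdischarged : IsProbVec ![(1 : ℝ), 0] := by simp [IsProbVec, Fin.forall_fin_two]
  have hdischarged_support : (Finset.univ.filter fun b => 0 < ![(1 : ℝ), 0] b) = {0} := by
    ext b
    fin_cases b <;> simp
  have hcharged : condVec {1} ![1, c] = ![(0 : ℝ), 1] := by
    ext b
    fin_cases b <;> simp [condVec, hc.ne']
  have hweights (x : ι × Fin 2) : 0 ≤ tensorVec g ![1, c] x := by
    have hbattery : ∀ b, 0 ≤ ![1, c] b := by simp [Fin.forall_fin_two, hc.le]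
    exact mul_nonneg (hg x.1) (hbattery x.2)
  rw [← hcharged, ← condVec_product_tensorVec,
    exists_colStochastic_mulVec_eq_condVec_iff hweights hweights (hp.tensorVec hdischarged) _ rfl,
    filter_pos_tensorVec hp.1 hdischarged.1, hdischarged_support, sum_product_tensorVec,
    sum_product_tensorVec]
  · simp
  · rw [sum_product_tensorVec]
    simpa using mul_pos hZ hc

end

theorem single_shot_distillable_work_general {ι : Type*} [Fintype ι] (β : ℝ) (hβ : 0 < β)
    (E : ι → ℝ) (g : ι → ℝ) (hg : ∀ i, g i = Real.exp (-β * E i))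
    (Z : ℝ) (hZ : Z = ∑ i, g i)
    (q : ι → ℝ) (hq : ∀ i, q i = g i / Z)
    (p : ι → ℝ) (hp : IsProbVec p)
    (W : ℝ)
    (G : ι × Fin 2 → ℝ)
    (hG : ∀ (i : ι) (b : Fin 2),
      G (i, b) = Real.exp (-β * E i) * Real.exp (-β * W * ((b : ℕ) : ℝ))) :
    ((∃ Λ : Matrix (ι × Fin 2) (ι × Fin 2) ℝ,
        ColStochastic Λ ∧ Λ.mulVec G = G ∧
        Λ.mulVec (tensorVec p ![1, 0]) = tensorVec q ![0, 1]) ↔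
      W ≤ β⁻¹ * Real.log
        (Z / ∑ i ∈ Finset.univ.filter (fun i => 0 < p i), Real.exp (-β * E i)))
    ∧ β⁻¹ * Real.log
        (Z / ∑ i ∈ Finset.univ.filter (fun i => 0 < p i), Real.exp (-β * E i))
      = β⁻¹ * renyiD 0 p q := by
  have hgpos (i : ι) : 0 < g i := hg i ▸ Real.exp_pos _
  have hq_cond : q = condVec Finset.univ g := by
    ext i
    simp [condVec, hq, hZ]
  have hG_tensor : G = tensorVec g ![1, Real.exp (-β * W)] := by
    ext ⟨i, b⟩
    fin_cases b <;> simp [tensorVec, hG, hg]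
  simp only [← hg]
  have hs : 0 < ∑ i with 0 < p i, g i :=
    Finset.sum_pos (fun i _ => hgpos i) hp.pos_support_nonempty
  have hZpos : 0 < Z :=
    hZ ▸ Finset.sum_pos (fun i _ => hgpos i) (hp.pos_support_nonempty.mono (Finset.subset_univ _))
  constructor
  · rw [le_inv_mul_log_div_iff hβ hZpos hs, hG_tensor, hq_cond]
    subst hZ
    exact exists_colStochastic_charge_battery_iff (fun i => (hgpos i).le) hZpos hp (Real.exp_pos _)
  · rw [renyiD_zero hp.1, ← Real.log_inv]
    simp only [hq, ← Finset.sum_div, inv_div]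

/-- **Single-shot distillable work (`F_0`).** With a qubit battery of gap `W`, a Gibbs-stochastic
map sending `p ⊗ |0⟩` to `q ⊗ |1⟩` exists iff `W ≤ β⁻¹ ln(Z / ∑_{i ∈ supp p} e^{-βE_i})`;
moreover the latter bound equals `β⁻¹ D_0(p‖q)`. -/
theorem single_shot_distillable_work {d : ℕ} (β : ℝ) (hβ : 0 < β) (E : Fin d → ℝ)
    (g : Fin d → ℝ) (hg : ∀ i, g i = Real.exp (-β * E i))
    (Z : ℝ) (hZ : Z = ∑ i, g i)
    (q : Fin d → ℝ) (hq : ∀ i, q i = g i / Z)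
    (p : Fin d → ℝ) (hp : IsProbVec p)
    (W : ℝ) (hW : 0 < W)
    (G : Fin d × Fin 2 → ℝ)
    (hG : ∀ (i : Fin d) (b : Fin 2),
      G (i, b) = Real.exp (-β * E i) * Real.exp (-β * W * ((b : ℕ) : ℝ))) :
    ((∃ Λ : Matrix (Fin d × Fin 2) (Fin d × Fin 2) ℝ,
        ColStochastic Λ ∧ Λ.mulVec G = G ∧
        Λ.mulVec (tensorVec p ![1, 0]) = tensorVec q ![0, 1]) ↔
      W ≤ β⁻¹ * Real.log
        (Z / ∑ i ∈ Finset.univ.filter (fun i => 0 < p i), Real.exp (-β * E i)))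
    ∧ β⁻¹ * Real.log
        (Z / ∑ i ∈ Finset.univ.filter (fun i => 0 < p i), Real.exp (-β * E i))
      = β⁻¹ * renyiD 0 p q :=
  single_shot_distillable_work_general β hβ E g hg Z hZ q hq p hp W G hG
end
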